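/- Under the D-BOCG setup with α = 0 (i.e., the losses are only assumed convex and G-Lipschitz on K̂), suppose T = K² (so B = K = √T), L = K, h = n^{1/4}T^{3/4}G / (√(1−σ)·R), and for each learner i and block m ∈ {1,…,B−1}, x_i(m+1) = CG(K̂, L, F_{m,i}, x_i(m)). Then for every learner i ∈ {1,…,n}, R_{T,i} ≤ (12n + 2√(1−σ)·n^{3/4} + (11/2)·n^{5/4}·(1−σ)^{−1/2})·G·R·T^{3/4}. -/

import Mathlib

/-! Let `φ θ` be the minimiser over `Khat` of `⟪θ, y⟫ + h ‖y - xin‖²`. The virtual sequence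
`φ (w m)`, where `w m` is the network average of the dual variables, is centralised
follow-the-regularised-leader, and the regret bound compares each learner with it.

* Every decision `x j m` is within `4R/√K + √n K G / ((1 - σ) 2h)` of `φ (w (m - 1))`: the first
  summand is the conditional-gradient error (`cg_dist`), the second is the consensus error of the
  dual variables (`consensus_le`) divided by the strong convexity parameter, since `φ` is
  `1/(2h)`-Lipschitz (`IsRegLeader.lipschitz`).
* Two further averaged gradients enter between `w (m - 1)` and `w (m + 1)`, which costs
  `‖φ (w (m - 1)) - φ (w (m + 1))‖ ≤ K G / h`.
* The sequence `φ (w (m + 1))` has linearised regret at most `4 h R²` by the be-the-leader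
  inequality (`IsRegLeader.btl`).

Convexity linearises the losses at the learners' own decisions (`block_regret_le`); the three
contributions are balanced by the prescribed `h` (`tuned_bound`). The case `G = 0`, where `h = 0`
and there is no strong convexity, is trivial because the losses are constant on `Khat`. The bound
`‖∇f‖ ≤ G` also at boundary points of `Khat` is `norm_gradient_le`. -/

open scoped RealInnerProductSpace

/-! ### Gradients at boundary points -/

/-- One-sided growth of `ψ` at the endpoint `0` bounds its derivative there; applied along segments
that may start at a boundary point of the feasible set. -/
theorem deriv_le_of_le_mul {ψ : ℝ → ℝ} {a C : ℝ} (hd : HasDerivAt ψ a 0) (h0 : ψ 0 = 0)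
    (hle : ∀ s ∈ Set.Ioc (0 : ℝ) 1, ψ s ≤ C * s) : a ≤ C := by
  have ht : Filter.Tendsto (slope ψ 0) (nhdsWithin 0 (Set.Ioi 0)) (nhds a) :=
    hd.tendsto_slope.mono_left (nhdsWithin_mono _ fun s hs => ne_of_gt hs)
  refine le_of_tendsto ht ?_
  filter_upwards [Ioc_mem_nhdsGT (zero_lt_one (α := ℝ))] with s hs
  rw [slope_def_field, h0, sub_zero, sub_zero, div_le_iff₀ hs.1]
  exact hle s hs

section

variable {E : Type*} [NormedAddCommGroup E] [InnerProductSpace ℝ E]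

theorem hasDerivAt_line [CompleteSpace E] {f : E → ℝ} {g x : E} (hg : HasGradientAt f g x) (v : E) :
    HasDerivAt (fun s : ℝ => f (x + s • v)) ⟪g, v⟫ 0 := by
  have hl : HasDerivAt (fun s : ℝ => x + s • v) v 0 := by
    simpa using ((hasDerivAt_id (0 : ℝ)).smul_const v).const_add x
  have hf : HasFDerivAt f (InnerProductSpace.toDual ℝ E g) (x + (0 : ℝ) • v) := by
    simpa using hg.hasFDerivAt
  exact hf.comp_hasDerivAt (0 : ℝ) hl

/-- First-order convexity inequality, also valid at boundary points of `S`. -/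
theorem gradient_ineq [CompleteSpace E] {S : Set E} {f : E → ℝ} {g x y : E} (hc : ConvexOn ℝ S f)
    (hg : HasGradientAt f g x) (hx : x ∈ S) (hy : y ∈ S) : f x - f y ≤ ⟪g, x - y⟫ := by
  have h1 := deriv_le_of_le_mul (C := f y - f x) ((hasDerivAt_line hg (y - x)).sub_const (f x))
    (by simp) (by
      rintro s ⟨h0, h1⟩
      have := hc.2 hx hy (sub_nonneg.2 h1) h0.le (by ring)
      rw [show (1 - s) • x + s • y = x + s • (y - x) by module] at this
      simp only [smul_eq_mul] at this
      linarith)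
  rw [← neg_sub y x, inner_neg_right]
  linarith

/-- The Lipschitz constant of `f` on `S` bounds its gradient also at boundary points of `S`, where
the cone of feasible directions may be too narrow to contain the gradient direction. The two curves
`s ↦ x + s(u - x)` and `s ↦ x + s(0 - x)`, with `u` in the inscribed ball and parallel to the
gradient, stay in `S`, are `s r` apart, and their values separate at rate `r ‖g‖`. -/
theorem norm_gradient_le [CompleteSpace E] {S : Set E} {f : E → ℝ} {g x : E} {r G : ℝ}
    (hS : Convex ℝ S)
    (hr : 0 < r) (hball : Metric.closedBall 0 r ⊆ S)
    (hlip : ∀ x ∈ S, ∀ y ∈ S, |f x - f y| ≤ G * ‖x - y‖)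
    (hg : HasGradientAt f g x) (hx : x ∈ S) (hG : 0 ≤ G) : ‖g‖ ≤ G := by
  by_cases hg0 : g = 0
  · simpa [hg0] using hG
  have hgp : 0 < ‖g‖ := norm_pos_iff.2 hg0
  set u : E := (r / ‖g‖) • g with hu
  have hun : ‖u‖ = r := by
    rw [hu, norm_smul, Real.norm_of_nonneg (by positivity)]; field_simp
  have hd := (hasDerivAt_line hg (u - x)).sub (hasDerivAt_line hg (0 - x))
  have key := deriv_le_of_le_mul (C := G * r) hd (by simp) (by
      rintro s ⟨h0, h1⟩
      have hmem : ∀ y ∈ S, x + s • (y - x) ∈ S := fun y hy =>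
        hS.add_smul_sub_mem hx hy ⟨h0.le, h1⟩
      have h2 := hlip _ (hmem u (hball (by simp [hun]))) _ (hmem 0 (hball (by simp [hr.le])))
      rw [show x + s • (u - x) - (x + s • (0 - x)) = s • u by module, norm_smul, hun,
        Real.norm_of_nonneg h0.le] at h2
      have := (abs_le.1 h2).2
      simp only [Pi.sub_apply]
      linarith)
  rw [← inner_sub_right, show u - x - (0 - x) = u by abel, hu, inner_smul_right,
    real_inner_self_eq_norm_sq] at key
  have : r / ‖g‖ * ‖g‖ ^ 2 = ‖g‖ * r := by field_simp
  rw [this] at key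
  exact le_of_mul_le_mul_right key hr

/-! ### Regularised leaders -/

/-- `φ θ` is the regularised leader `argmin_{y ∈ S} ⟪θ, y⟫ + h ‖y - a‖²` for every dual vector `θ`,
encoded by feasibility together with the first-order optimality condition. -/
def IsRegLeader (S : Set E) (h : ℝ) (a : E) (φ : E → E) : Prop :=
  ∀ θ, φ θ ∈ S ∧ ∀ y ∈ S, 0 ≤ ⟪θ + (2 * h) • (φ θ - a), y - φ θ⟫

theorem exists_isRegLeader [CompleteSpace E] {S : Set E} (hS : Convex ℝ S)
    (hc : IsCompact S) {h : ℝ} (hh : 0 < h)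
    {a : E} (ha : a ∈ S) : ∃ φ, IsRegLeader S h a φ := by
  have : ∀ θ : E, ∃ p ∈ S, ∀ y ∈ S, 0 ≤ ⟪θ + (2 * h) • (p - a), y - p⟫ := by
    intro θ
    obtain ⟨p, hp, hpe⟩ := exists_norm_eq_iInf_of_complete_convex ⟨a, ha⟩ hc.isComplete hS
      (a - (2 * h)⁻¹ • θ)
    refine ⟨p, hp, fun y hy => ?_⟩
    have := (norm_eq_iInf_iff_real_inner_le_zero hS hp).1 hpe y hy
    have hθ : θ = (2 * h) • ((2 * h)⁻¹ • θ) := by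
      rw [smul_smul, mul_inv_cancel₀ (by positivity), one_smul]
    rw [show θ + (2 * h) • (p - a) = (-(2 * h)) • (a - (2 * h)⁻¹ • θ - p) by
      nth_rewrite 1 [hθ]; module, real_inner_smul_left]
    nlinarith
  choose φ h1 h2 using this
  exact ⟨φ, fun θ => ⟨h1 θ, h2 θ⟩⟩

/-- Strong convexity: the surrogate loss grows quadratically away from its minimiser. -/
theorem IsRegLeader.growth {S : Set E} {h : ℝ} {a : E} {φ : E → E} (hφ : IsRegLeader S h a φ)
    (θ : E) {y : E} (hy : y ∈ S) :
    ⟪θ, φ θ⟫ + h * ‖φ θ - a‖ ^ 2 + h * ‖y - φ θ‖ ^ 2 ≤ ⟪θ, y⟫ + h * ‖y - a‖ ^ 2 := by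
  have h1 := (hφ θ).2 y hy
  have h2 : ‖y - a‖ ^ 2 = ‖y - φ θ‖ ^ 2 + 2 * ⟪φ θ - a, y - φ θ⟫ + ‖φ θ - a‖ ^ 2 := by
    rw [show y - a = (y - φ θ) + (φ θ - a) by abel, norm_add_sq_real, real_inner_comm]
  rw [inner_add_left, real_inner_smul_left, inner_sub_right θ] at h1
  rw [h2]
  linarith

theorem IsRegLeader.lipschitz {S : Set E} {h : ℝ} {a : E} {φ : E → E} (hφ : IsRegLeader S h a φ)
    (hh : 0 < h) (θ η : E) : ‖φ θ - φ η‖ ≤ ‖θ - η‖ / (2 * h) := by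
  have h1 := (hφ θ).2 _ (hφ η).1
  have h2 := (hφ η).2 _ (hφ θ).1
  rw [← neg_sub (φ θ) (φ η), inner_neg_right] at h1
  have h3 : (2 * h) * ‖φ θ - φ η‖ ^ 2 ≤ ⟪η - θ, φ θ - φ η⟫ := by
    rw [← real_inner_self_eq_norm_sq, ← real_inner_smul_left]
    have : ⟪η - θ, φ θ - φ η⟫ - ⟪(2 * h) • (φ θ - φ η), φ θ - φ η⟫ =
      ⟪η + (2 * h) • (φ η - a), φ θ - φ η⟫ - ⟪θ + (2 * h) • (φ θ - a), φ θ - φ η⟫ := by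
      rw [← inner_sub_left, ← inner_sub_left]; congr 1; module
    linarith
  have h4 := (real_inner_le_norm (η - θ) (φ θ - φ η))
  rw [norm_sub_rev η θ] at h4
  rw [le_div_iff₀ (by positivity)]
  rcases (norm_nonneg (φ θ - φ η)).eq_or_lt with h0 | h0
  · rw [← h0, zero_mul]; positivity
  · refine le_of_mul_le_mul_right ?_ h0
    nlinarith

theorem IsRegLeader.zero {S : Set E} {h : ℝ} {a : E} {φ : E → E} (hφ : IsRegLeader S h a φ)
    (hh : 0 < h) (ha : a ∈ S) : φ 0 = a := by
  have := hφ.growth 0 ha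
  rw [norm_sub_rev] at this
  simp only [inner_zero_left, sub_self, norm_zero] at this
  have h2 : h * ‖a - φ 0‖ ^ 2 ≤ 0 := by linarith
  have h3 : ‖a - φ 0‖ ^ 2 ≤ 0 := by
    by_contra! hc
    linarith [mul_pos hh hc]
  have h4 : ‖a - φ 0‖ = 0 := by nlinarith [norm_nonneg (a - φ 0)]
  exact (sub_eq_zero.1 (norm_eq_zero.1 h4)).symm

/-- The be-the-leader inequality: playing the leader that already knows the current loss `g m` is,
in total, no worse than any fixed `y`, up to the regulariser. -/
theorem IsRegLeader.btl {S : Set E} {h : ℝ} {a : E} {φ : E → E} (hφ : IsRegLeader S h a φ)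
    (hh : 0 ≤ h) (g w : ℕ → E) (hw0 : w 1 = 0) (hw : ∀ m, 1 ≤ m → w (m + 1) = w m + g m) (N : ℕ) :
    ∀ y ∈ S, ∑ m ∈ Finset.Icc 1 N, ⟪g m, φ (w (m + 1))⟫ ≤
      ⟪w (N + 1), y⟫ + h * ‖y - a‖ ^ 2 := by
  induction N with
  | zero => intro y _; simp [hw0]; positivity
  | succ N ih =>
    intro y hy
    rw [Finset.sum_Icc_succ_top (by omega)]
    have h1 := ih _ (hφ (w (N + 1 + 1))).1
    have h2 := hφ.growth (w (N + 1 + 1)) hy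
    have h3 : 0 ≤ h * ‖y - φ (w (N + 1 + 1))‖ ^ 2 := by positivity
    have h4 : ⟪w (N + 1 + 1), φ (w (N + 1 + 1))⟫ =
        ⟪w (N + 1), φ (w (N + 1 + 1))⟫ + ⟪g (N + 1), φ (w (N + 1 + 1))⟫ := by
      rw [← inner_add_left, ← hw (N + 1) (by omega)]
    linarith

/-! ### Conditional gradient -/

/-- After `L` conditional-gradient steps with exact line search the surrogate gap is at most
`16 h R² / (L + 2)` (curvature `2h`, diameter at most `2R`); by strong convexity the output is then
close to the exact minimiser, with a bound independent of `h` and of the starting point. -/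
theorem cg_dist {S : Set E} {h R : ℝ} {a θ : E} {φ : E → E} (hφ : IsRegLeader S h a φ)
    (hh : 0 < h) (hR : S ⊆ Metric.closedBall 0 R) (L : ℕ) (hL : 1 ≤ L)
    (F : E → ℝ) (hF : ∀ y, F y = ⟪θ, y⟫ + h * ‖y - a‖ ^ 2)
    (cs vs : ℕ → E) (ss : ℕ → ℝ)
    (hcs : ∀ τ ≤ L, cs τ ∈ S) (hvs : ∀ τ < L, vs τ ∈ S)
    (hlin : ∀ τ < L, ∀ y ∈ S, ⟪θ + (2 * h) • (cs τ - a), vs τ⟫ ≤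
      ⟪θ + (2 * h) • (cs τ - a), y⟫)
    (hls : ∀ τ < L, ∀ s' ∈ Set.Icc (0 : ℝ) 1,
      F (cs τ + ss τ • (vs τ - cs τ)) ≤ F (cs τ + s' • (vs τ - cs τ)))
    (hstep : ∀ τ < L, cs (τ + 1) = cs τ + ss τ • (vs τ - cs τ)) :
    ‖cs L - φ θ‖ ^ 2 ≤ 16 * R ^ 2 / (L + 2) := by
  have hp := (hφ θ).1
  have hcontr : ∀ τ < L, ∀ s ∈ Set.Icc (0 : ℝ) 1,
      F (cs (τ + 1)) - F (φ θ) ≤ (1 - s) * (F (cs τ) - F (φ θ)) + 4 * h * R ^ 2 * s ^ 2 := by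
    rintro τ hτ s ⟨hs0, hs1⟩
    have hR1 : ‖vs τ - cs τ‖ ≤ 2 * R := by
      have h1 := hR (hvs τ hτ)
      have h2 := hR (hcs τ hτ.le)
      rw [mem_closedBall_zero_iff] at h1 h2
      linarith [norm_sub_le (vs τ) (cs τ)]
    have hR2 : ‖vs τ - cs τ‖ ^ 2 ≤ 4 * R ^ 2 := by nlinarith [norm_nonneg (vs τ - cs τ)]
    have hexp : F (cs τ + s • (vs τ - cs τ)) = F (cs τ) +
        s * ⟪θ + (2 * h) • (cs τ - a), vs τ - cs τ⟫ + h * s ^ 2 * ‖vs τ - cs τ‖ ^ 2 := by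
      rw [hF, hF, show cs τ + s • (vs τ - cs τ) - a = (cs τ - a) + s • (vs τ - cs τ) by abel,
        norm_add_sq_real, norm_smul, mul_pow, Real.norm_eq_abs, sq_abs, inner_add_right,
        inner_add_left, real_inner_smul_right, real_inner_smul_left, real_inner_smul_right]
      ring
    have hgap : ⟪θ + (2 * h) • (cs τ - a), φ θ - cs τ⟫ ≤ F (φ θ) - F (cs τ) := by
      rw [hF, hF, show φ θ - a = (cs τ - a) + (φ θ - cs τ) by abel, norm_add_sq_real,
        inner_add_left, real_inner_smul_left, inner_sub_right θ]
      have : 0 ≤ h * ‖φ θ - cs τ‖ ^ 2 := by positivity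
      linarith
    have h1 := hls τ hτ s ⟨hs0, hs1⟩
    rw [← hstep τ hτ, hexp] at h1
    have h2 := hlin τ hτ _ hp
    have h3 : ⟪θ + (2 * h) • (cs τ - a), vs τ - cs τ⟫ ≤ F (φ θ) - F (cs τ) := by
      rw [inner_sub_right] at hgap ⊢
      linarith
    have h4 := mul_le_mul_of_nonneg_left h3 hs0
    have h5 := mul_le_mul_of_nonneg_left hR2 (by positivity : 0 ≤ h * s ^ 2)
    linarith
  have hrate : ∀ τ < L, F (cs (τ + 1)) - F (φ θ) ≤ 16 * h * R ^ 2 / ((τ : ℝ) + 3) := by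
    intro τ
    induction τ with
    | zero =>
      intro hτ
      -- A full step removes the dependence on the initial gap.
      have := hcontr 0 hτ 1 (by norm_num)
      have h0 : 0 ≤ h * R ^ 2 := by positivity
      norm_num at this ⊢
      linarith
    | succ τ ih =>
      intro hτ
      have h1 := ih (by omega)
      have hmem : (2 : ℝ) / (τ + 3) ∈ Set.Icc (0 : ℝ) 1 := by
        refine ⟨by positivity, ?_⟩
        rw [div_le_one (by positivity)]
        have : (0 : ℝ) ≤ τ := by positivity
        linarith
      -- The classical step size `2 / (k + 2)`, at `k = τ + 1`, competes in the line search.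
      have h2 := hcontr (τ + 1) hτ _ hmem
      have h3 := mul_le_mul_of_nonneg_left h1 (sub_nonneg.2 hmem.2)
      refine h2.trans ((add_le_add_left h3 _).trans ?_)
      push_cast
      have hτ0 : (0 : ℝ) ≤ τ := by positivity
      rw [show (1 - 2 / ((τ : ℝ) + 3)) * (16 * h * R ^ 2 / (τ + 3)) +
          4 * h * R ^ 2 * (2 / (τ + 3)) ^ 2 =
          16 * h * R ^ 2 * (((τ : ℝ) + 2) / (τ + 3) ^ 2) by field_simp; ring,
        show 16 * h * R ^ 2 / ((τ : ℝ) + 1 + 3) = 16 * h * R ^ 2 * (1 / (τ + 4)) by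
          field_simp; ring]
      refine mul_le_mul_of_nonneg_left ?_ (by positivity)
      rw [div_le_div_iff₀ (by positivity) (by positivity)]
      nlinarith
  obtain ⟨l, rfl⟩ : ∃ l, L = l + 1 := ⟨L - 1, by omega⟩
  have h1 := hrate l (by omega)
  have h2 := hφ.growth θ (hcs (l + 1) le_rfl)
  rw [← hF, ← hF] at h2
  push_cast
  rw [show (l : ℝ) + 1 + 2 = l + 3 by ring]
  refine le_of_mul_le_mul_left (a := h) ?_ hh
  rw [show h * (16 * R ^ 2 / ((l : ℝ) + 3)) = 16 * h * R ^ 2 / ((l : ℝ) + 3) by ring]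
  linarith
/-! ### Consensus -/

/-- A matrix acting on a family of `n` vectors is bounded, in the Frobenius norm, by its `ℓ²`
operator norm: apply the scalar bound to each coordinate. -/
theorem frobenius_mul_le {n d : ℕ} (M : Matrix (Fin n) (Fin n) ℝ)
    (u : Fin n → EuclideanSpace ℝ (Fin d)) :
    ‖WithLp.toLp 2 (fun i => ∑ j, M i j • u j)‖ ≤
      ‖Matrix.toEuclideanCLM (𝕜 := ℝ) (n := Fin n) M‖ * ‖WithLp.toLp 2 u‖ := by
  refine (sq_le_sq₀ (by positivity) (by positivity)).1 ?_
  have hcol : ∀ k : Fin d, ∑ i, (∑ j, M i j * u j k) ^ 2 ≤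
      ‖Matrix.toEuclideanCLM (𝕜 := ℝ) (n := Fin n) M‖ ^ 2 * ∑ i, (u i k) ^ 2 := by
    intro k
    have h1 := (Matrix.toEuclideanCLM (𝕜 := ℝ) (n := Fin n) M).le_opNorm
      (WithLp.toLp 2 fun i => u i k)
    have h2 := pow_le_pow_left₀ (norm_nonneg _) h1 2
    rw [mul_pow, EuclideanSpace.norm_sq_eq, EuclideanSpace.norm_sq_eq,
      Matrix.toEuclideanCLM_toLp] at h2
    simpa [Matrix.mulVec, dotProduct] using h2
  have h := Finset.sum_le_sum fun k (_ : k ∈ Finset.univ) => hcol k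
  rw [← Finset.mul_sum, Finset.sum_comm, Finset.sum_comm (f := fun k i => (u i k) ^ 2)] at h
  rw [mul_pow, PiLp.norm_sq_eq_of_L2, PiLp.norm_sq_eq_of_L2]
  simpa [EuclideanSpace.norm_sq_eq] using h

/-- Subtracting the mean does not increase the Frobenius norm. -/
theorem frobenius_center_le {n : ℕ} (hn : 1 ≤ n) (u : Fin n → E) :
    ‖WithLp.toLp 2 (fun i => u i - (n : ℝ)⁻¹ • ∑ j, u j)‖ ≤ ‖WithLp.toLp 2 u‖ := by
  refine (sq_le_sq₀ (by positivity) (by positivity)).1 ?_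
  rw [PiLp.norm_sq_eq_of_L2, PiLp.norm_sq_eq_of_L2]
  simp only [norm_sub_sq_real, Finset.sum_add_distrib, Finset.sum_sub_distrib, ← Finset.mul_sum,
    ← sum_inner, Finset.sum_const, Finset.card_univ, Fintype.card_fin, nsmul_eq_mul]
  set s := ∑ j, u j
  have hn' : (0 : ℝ) < n := by exact_mod_cast hn
  rw [real_inner_smul_right, real_inner_self_eq_norm_sq, norm_smul, mul_pow, norm_inv,
    Real.norm_natCast]
  have : (n : ℝ) * ((n : ℝ)⁻¹ ^ 2 * ‖s‖ ^ 2) = (n : ℝ)⁻¹ * ‖s‖ ^ 2 := by field_simp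
  rw [this]
  have : 0 ≤ (n : ℝ)⁻¹ * ‖s‖ ^ 2 := by positivity
  linarith

/-- Consensus error: if `w` runs the averaged recursion, every dual variable stays within
`√n c / (1 - σ)` of it. The stacked deviations satisfy `e(m+1) = (P - J) e(m) + (g - mean g)`, where
`J` is the averaging matrix, hence `‖e(m+1)‖ ≤ σ ‖e(m)‖ + √n c`. -/
theorem consensus_le {n d B : ℕ} (hn : 1 ≤ n) (P : Matrix (Fin n) (Fin n) ℝ)
    (hrow : ∀ i, ∑ j, P i j = 1) (hcol : ∀ j, ∑ i, P i j = 1) {σ c : ℝ}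
    (hσ : σ = ‖Matrix.toEuclideanCLM (𝕜 := ℝ) (n := Fin n)
      (P - Matrix.of fun _ _ => (n : ℝ)⁻¹)‖) (hσlt : σ < 1) (hc : 0 ≤ c)
    (g z : Fin n → ℕ → EuclideanSpace ℝ (Fin d)) (w : ℕ → EuclideanSpace ℝ (Fin d))
    (hg : ∀ (i : Fin n), ∀ m ∈ Finset.Icc 1 B, ‖g i m‖ ≤ c)
    (hz1 : ∀ i, z i 1 = 0)
    (hzrec : ∀ (i : Fin n), ∀ m ∈ Finset.Icc 1 B,
      z i (m + 1) = (∑ j, P i j • z j m) + g i m)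
    (hw1 : w 1 = 0) (hw : ∀ m, 1 ≤ m → w (m + 1) = w m + (n : ℝ)⁻¹ • ∑ j, g j m)
    (i : Fin n) (m : ℕ) (hm : m ∈ Finset.Icc 1 (B + 1)) :
    ‖z i m - w m‖ ≤ √n * c / (1 - σ) := by
  have hn' : (n : ℝ) ≠ 0 := by positivity
  have hσ1 : 0 < 1 - σ := by linarith
  have hσ0 : 0 ≤ σ := hσ ▸ norm_nonneg _
  have key : ∀ k, k ≤ B → (∑ j, z j (k + 1) = (n : ℝ) • w (k + 1)) ∧
      ‖WithLp.toLp 2 (fun j => z j (k + 1) - w (k + 1))‖ ≤ √n * c / (1 - σ) := by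
    intro k
    induction k with
    | zero =>
      intro _
      refine ⟨by simp [hz1, hw1], ?_⟩
      have : (fun j => z j (0 + 1) - w (0 + 1)) = 0 := by ext1 j; simp [hz1, hw1]
      rw [this, WithLp.toLp_zero, norm_zero]
      positivity
    | succ k ih =>
      intro hk
      obtain ⟨hsum, hdev⟩ := ih (by omega)
      have hmem : k + 1 ∈ Finset.Icc 1 B := by simp; omega
      have hwk := hw (k + 1) (by omega)
      constructor
      · rw [Finset.sum_congr rfl fun j _ => hzrec j (k + 1) hmem, Finset.sum_add_distrib,
          Finset.sum_comm]
        simp only [← Finset.sum_smul, hcol, one_smul]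
        rw [hsum, hwk, smul_add, smul_inv_smul₀ hn']
      · have hsplit : WithLp.toLp 2 (fun i => z i (k + 1 + 1) - w (k + 1 + 1)) =
            WithLp.toLp 2 (fun i => ∑ j,
              (P - Matrix.of fun _ _ => (n : ℝ)⁻¹ : Matrix (Fin n) (Fin n) ℝ) i j •
                (z j (k + 1) - w (k + 1))) +
            WithLp.toLp 2 (fun i => g i (k + 1) - (n : ℝ)⁻¹ • ∑ j, g j (k + 1)) := by
          rw [← WithLp.toLp_add]
          congr 1
          ext1 i
          have h1 : ∑ j, (P - Matrix.of fun _ _ => (n : ℝ)⁻¹ : Matrix (Fin n) (Fin n) ℝ) i j •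
                (z j (k + 1) - w (k + 1)) =
              ∑ j, P i j • z j (k + 1) - w (k + 1) := by
            simp only [Matrix.sub_apply, Matrix.of_apply, smul_sub, sub_smul,
              Finset.sum_sub_distrib, ← Finset.sum_smul, ← Finset.smul_sum, hrow, hsum, one_smul]
            simp [smul_smul, hn']
          rw [Pi.add_apply, h1, hzrec i (k + 1) hmem, hwk]
          abel
        have hgn : ‖WithLp.toLp 2 (fun i => g i (k + 1))‖ ≤ √n * c := by
          refine (sq_le_sq₀ (by positivity) (by positivity)).1 ?_
          rw [PiLp.norm_sq_eq_of_L2, mul_pow, Real.sq_sqrt (by positivity)]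
          calc ∑ i, ‖g i (k + 1)‖ ^ 2 ≤ ∑ _i : Fin n, c ^ 2 :=
                Finset.sum_le_sum fun i _ =>
                  pow_le_pow_left₀ (norm_nonneg _) (hg i (k + 1) hmem) 2
            _ = n * c ^ 2 := by simp
        have h1 := frobenius_mul_le (P - Matrix.of fun _ _ => (n : ℝ)⁻¹)
          (fun j => z j (k + 1) - w (k + 1))
        rw [← hσ] at h1
        have h2 := frobenius_center_le hn (fun i => g i (k + 1))
        rw [hsplit]
        calc _ ≤ σ * (√n * c / (1 - σ)) + √n * c :=
              (norm_add_le _ _).trans (add_le_add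
                (h1.trans (mul_le_mul_of_nonneg_left hdev hσ0)) (h2.trans hgn))
          _ = √n * c / (1 - σ) := by field_simp; ring
  obtain ⟨k, rfl⟩ : ∃ k, m = k + 1 := ⟨m - 1, by simp at hm; omega⟩
  refine le_trans ?_ (key k (by simp at hm; omega)).2
  exact PiLp.norm_apply_le (WithLp.toLp 2 fun j => z j (k + 1) - w (k + 1)) i

/-! ### Regret of blocks -/

theorem sum_blocks (K : ℕ) (a : ℕ → ℝ) (B : ℕ) :
    ∑ t ∈ Finset.Icc 1 (B * K), a t =
      ∑ m ∈ Finset.Icc 1 B, ∑ t ∈ Finset.Icc ((m - 1) * K + 1) (m * K), a t := by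
  induction B with
  | zero => simp
  | succ B ih =>
    rw [Finset.sum_Icc_succ_top (by omega), ← ih]
    simp only [Nat.add_sub_cancel, ← Finset.Ico_add_one_right_eq_Icc]
    rw [Finset.sum_Ico_consecutive _ (by omega) (by nlinarith)]

/-- Regret of one block, linearised at the learners' own decisions `X j` and transferred to a
reference point `v` through an intermediate point `u` near all the `X j`. -/
theorem block_regret_le [CompleteSpace E] {n : ℕ} {S : Set E} {G ρ δ : ℝ} (hG : 0 ≤ G)
    (I : Finset ℕ) (f : ℕ → Fin n → E → ℝ) (f' : ℕ → Fin n → E → E)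
    (hdiff : ∀ t i x, HasGradientAt (f t i) (f' t i x) x)
    (hconv : ∀ t i, ConvexOn ℝ S (f t i))
    (hlip : ∀ t ∈ I, ∀ i, ∀ x ∈ S, ∀ y ∈ S, |f t i x - f t i y| ≤ G * ‖x - y‖)
    (hgrad : ∀ t ∈ I, ∀ i, ∀ x ∈ S, ‖f' t i x‖ ≤ G)
    (X : Fin n → E) (hX : ∀ j, X j ∈ S) {u v y : E} (hy : y ∈ S)
    (hXu : ∀ j, ‖X j - u‖ ≤ ρ) (huv : ‖u - v‖ ≤ δ) (i : Fin n) :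
    ∑ t ∈ I, ∑ j, f t j (X i) - ∑ t ∈ I, ∑ j, f t j y ≤
      I.card * n * (3 * G * ρ + G * δ) + ⟪∑ j, ∑ t ∈ I, f' t j (X j), v - y⟫ := by
  have hpt : ∀ t ∈ I, ∀ j, f t j (X i) - f t j y ≤
      (3 * G * ρ + G * δ) + ⟪f' t j (X j), v - y⟫ := by
    intro t ht j
    have h1 := (abs_le.1 (hlip t ht j _ (hX i) _ (hX j))).2
    have h2 : ‖X i - X j‖ ≤ 2 * ρ := by
      rw [show X i - X j = (X i - u) - (X j - u) by abel]
      linarith [norm_sub_le (X i - u) (X j - u), hXu i, hXu j]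
    have h3 := gradient_ineq (hconv t j) (hdiff t j (X j)) (hX j) hy
    rw [show X j - y = (X j - u) + (u - v) + (v - y) by abel, inner_add_right,
      inner_add_right] at h3
    have h4 : ⟪f' t j (X j), X j - u⟫ ≤ G * ρ := (real_inner_le_norm _ _).trans
      (mul_le_mul (hgrad t ht j _ (hX j)) (hXu j) (norm_nonneg _) hG)
    have h5 : ⟪f' t j (X j), u - v⟫ ≤ G * δ := (real_inner_le_norm _ _).trans
      (mul_le_mul (hgrad t ht j _ (hX j)) huv (norm_nonneg _) hG)
    have h6 := mul_le_mul_of_nonneg_left h2 hG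
    linarith
  have h := Finset.sum_le_sum fun t ht =>
    Finset.sum_le_sum fun j (_ : j ∈ Finset.univ) => hpt t ht j
  simp only [Finset.sum_sub_distrib, Finset.sum_add_distrib, Finset.sum_const, Finset.card_univ,
    Fintype.card_fin, nsmul_eq_mul, ← sum_inner] at h
  rw [Finset.sum_comm (s := Finset.univ)]
  linarith

/-- The three error terms evaluated at the prescribed `h`, in the variables `a = n^{1/4}`,
`q = √K = T^{1/4}` and `s = √(1 - σ)`. -/
theorem tuned_bound {a q s R G : ℝ} (ha : 0 < a) (hq : 0 < q) (hs : 0 < s) (hR : 0 < R)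
    (hG : 0 < G) :
    q ^ 2 * (q ^ 2 * a ^ 4 * (3 * G * (4 * R / q + a ^ 2 * (q ^ 2 * G) / s ^ 2 /
        (2 * (a * q ^ 3 * G / (s * R)))) +
      G * (2 * (q ^ 2 * G) / (2 * (a * q ^ 3 * G / (s * R)))))) +
      a ^ 4 * (a * q ^ 3 * G / (s * R) * (4 * R ^ 2)) ≤
    (12 * a ^ 4 + 2 * s * a ^ 3 + 11 / 2 * a ^ 5 * s⁻¹) * G * R * q ^ 3 := by
  have h0 : 0 ≤ s * a ^ 3 * G * R * q ^ 3 := by positivity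
  have : q ^ 2 * (q ^ 2 * a ^ 4 * (3 * G * (4 * R / q + a ^ 2 * (q ^ 2 * G) / s ^ 2 /
        (2 * (a * q ^ 3 * G / (s * R)))) +
      G * (2 * (q ^ 2 * G) / (2 * (a * q ^ 3 * G / (s * R)))))) +
      a ^ 4 * (a * q ^ 3 * G / (s * R) * (4 * R ^ 2)) =
    (12 * a ^ 4 + s * a ^ 3 + 11 / 2 * a ^ 5 * s⁻¹) * G * R * q ^ 3 := by
    field_simp
    ring
  rw [this]
  linarith

end

/-! ### The regret bound -/

/-- Corollary: D-BOCG with convex losses and parameters `K = L = √T` and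
`h = n^{1/4}T^{3/4}G/(√(1−σ)R)` attains regret at most
`(12n + 2√(1−σ)n^{3/4} + (11/2)n^{5/4}(1−σ)^{−1/2})GRT^{3/4}` for every local learner. -/
theorem dbocg_regret_bound_convex_losses
    (d n B K T L : ℕ) (hd : 1 ≤ d) (hn : 1 ≤ n) (hK : 1 ≤ K)
    (hBK : B = K) (hT : T = K * K) (hLK : L = K)
    (Khat : Set (EuclideanSpace ℝ (Fin d)))
    (hKconv : Convex ℝ Khat) (hKcomp : IsCompact Khat)
    (r R : ℝ) (hr : 0 < r) (hrR : r ≤ R)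
    (hballin : Metric.closedBall 0 r ⊆ Khat)
    (hballout : Khat ⊆ Metric.closedBall 0 R)
    (G : ℝ)
    (f : ℕ → Fin n → EuclideanSpace ℝ (Fin d) → ℝ)
    (f' : ℕ → Fin n → EuclideanSpace ℝ (Fin d) → EuclideanSpace ℝ (Fin d))
    (hdiff : ∀ t i x, HasGradientAt (f t i) (f' t i x) x)
    (hconv : ∀ (t : ℕ) (i : Fin n), ConvexOn ℝ Khat (f t i))
    (hlip : ∀ t ∈ Finset.Icc 1 T, ∀ (i : Fin n), ∀ x ∈ Khat, ∀ y ∈ Khat,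
      |f t i x - f t i y| ≤ G * ‖x - y‖)
    (P : Matrix (Fin n) (Fin n) ℝ)
    (hpos : ∀ i j, 0 ≤ P i j) (hsymm : P.IsSymm)
    (hrow : ∀ i, ∑ j, P i j = 1) (hcol : ∀ j, ∑ i, P i j = 1)
    (σ : ℝ)
    (hσ : σ = ‖Matrix.toEuclideanCLM (𝕜 := ℝ) (n := Fin n)
      (P - Matrix.of fun _ _ => (n : ℝ)⁻¹)‖)
    (hσlt : σ < 1)
    (h : ℝ)
    (hh : h = (n : ℝ) ^ ((1 : ℝ) / 4) * (T : ℝ) ^ ((3 : ℝ) / 4) * G /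
      (Real.sqrt (1 - σ) * R))
    (xin : EuclideanSpace ℝ (Fin d)) (hxin : xin ∈ Khat)
    (x : Fin n → ℕ → EuclideanSpace ℝ (Fin d))
    (hx1 : ∀ i, x i 1 = xin)
    (hxK : ∀ (i : Fin n), ∀ m ∈ Finset.Icc 1 B, x i m ∈ Khat)
    (ghat : Fin n → ℕ → EuclideanSpace ℝ (Fin d))
    (hghat : ∀ (i : Fin n), ∀ m ∈ Finset.Icc 1 B,
      ghat i m = ∑ t ∈ Finset.Icc ((m - 1) * K + 1) (m * K), f' t i (x i m))
    (z : Fin n → ℕ → EuclideanSpace ℝ (Fin d))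
    (hz1 : ∀ i, z i 1 = 0)
    (hzrec : ∀ (i : Fin n), ∀ m ∈ Finset.Icc 1 B,
      z i (m + 1) = (∑ j, P i j • z j m) + ghat i m)
    (F : ℕ → Fin n → EuclideanSpace ℝ (Fin d) → ℝ)
    (hF : ∀ (m : ℕ) (i : Fin n) (y : EuclideanSpace ℝ (Fin d)),
      F m i y = ⟪z i m, y⟫ + h * ‖y - xin‖ ^ 2)
    -- the update `x i (m+1) = CG(Khat, L, F m i, x i m)` with exact line search,
    -- where `∇F m i y = z i m + 2h • (y − xin)`
    (hCG : ∀ (i : Fin n), ∀ m ∈ Finset.Icc 1 (B - 1),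
      ∃ (cs vs : ℕ → EuclideanSpace ℝ (Fin d)) (ss : ℕ → ℝ),
        cs 0 = x i m ∧ cs L = x i (m + 1) ∧
        (∀ τ ≤ L, cs τ ∈ Khat) ∧
        (∀ τ < L, vs τ ∈ Khat) ∧
        (∀ τ < L, ss τ ∈ Set.Icc (0 : ℝ) 1) ∧
        (∀ τ < L, ∀ y ∈ Khat,
          ⟪z i m + (2 * h) • (cs τ - xin), vs τ⟫ ≤
          ⟪z i m + (2 * h) • (cs τ - xin), y⟫) ∧
        (∀ τ < L, ∀ s' ∈ Set.Icc (0 : ℝ) 1,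
          F m i (cs τ + ss τ • (vs τ - cs τ)) ≤ F m i (cs τ + s' • (vs τ - cs τ))) ∧
        (∀ τ < L, cs (τ + 1) = cs τ + ss τ • (vs τ - cs τ))) :
    ∀ (i : Fin n), ∀ xstar ∈ Khat,
      (∑ m ∈ Finset.Icc 1 B, ∑ t ∈ Finset.Icc ((m - 1) * K + 1) (m * K),
          ∑ j, f t j (x i m)) -
        (∑ t ∈ Finset.Icc 1 T, ∑ j, f t j xstar) ≤
      (12 * n + 2 * Real.sqrt (1 - σ) * (n : ℝ) ^ ((3 : ℝ) / 4) +
          11 / 2 * (n : ℝ) ^ ((5 : ℝ) / 4) * (1 - σ) ^ (-(1 : ℝ) / 2)) *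
        G * R * (T : ℝ) ^ ((3 : ℝ) / 4) := by
  intro i xstar hxs
  subst hBK hT hLK
  have hR : 0 < R := hr.trans_le hrR
  have h0S : (0 : EuclideanSpace ℝ (Fin d)) ∈ Khat := hballin (by simp [hr.le])
  have hnorm : ∀ y ∈ Khat, ‖y‖ ≤ R := fun y hy => mem_closedBall_zero_iff.1 (hballout hy)
  have hsub : ∀ m ∈ Finset.Icc 1 L, ∀ t ∈ Finset.Icc ((m - 1) * L + 1) (m * L),
      t ∈ Finset.Icc 1 (L * L) := by
    intro m hm t ht
    simp only [Finset.mem_Icc] at *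
    exact ⟨by omega, ht.2.trans (Nat.mul_le_mul_right L hm.2)⟩
  -- `d ≥ 1` and `r > 0` provide two distinct feasible points, which forces `G ≥ 0`.
  have hG : 0 ≤ G := by
    have hu : EuclideanSpace.single (⟨0, hd⟩ : Fin d) r ∈ Khat :=
      hballin (by simp [abs_of_pos hr])
    have h1 := (abs_nonneg _).trans
      (hlip 1 (by simp; nlinarith) ⟨0, hn⟩ _ hu _ h0S)
    simp only [sub_zero, PiLp.norm_single, Real.norm_eq_abs, abs_of_pos hr] at h1
    exact nonneg_of_mul_nonneg_left h1 hr
  rw [sum_blocks, ← Finset.sum_sub_distrib]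
  rcases hG.eq_or_lt with rfl | hGpos
  · rw [mul_zero, zero_mul, zero_mul]
    refine Finset.sum_nonpos fun m hm => ?_
    rw [← Finset.sum_sub_distrib]
    refine Finset.sum_nonpos fun t ht => ?_
    rw [← Finset.sum_sub_distrib]
    refine Finset.sum_nonpos fun j _ => ?_
    have := (abs_le.1 (hlip t (hsub m hm t ht) j _ (hxK i m hm) _ hxs)).2
    linarith
  have hgrad : ∀ t ∈ Finset.Icc 1 (L * L), ∀ j, ∀ y ∈ Khat, ‖f' t j y‖ ≤ G :=
    fun t ht j y hy => norm_gradient_le hKconv hr hballin (hlip t ht j) (hdiff t j y) hy hG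
  have hn0 : (0 : ℝ) < n := by exact_mod_cast hn
  have hL0 : (0 : ℝ) < L := by exact_mod_cast hK
  set a : ℝ := (n : ℝ) ^ ((1 : ℝ) / 4) with ha_def
  set q : ℝ := √(L : ℝ) with hq_def
  set s : ℝ := √(1 - σ) with hs_def
  have ha : 0 < a := by positivity
  have hq : 0 < q := Real.sqrt_pos.2 hL0
  have hs : 0 < s := Real.sqrt_pos.2 (by linarith)
  have ha4 : (n : ℝ) = a ^ 4 := by
    rw [ha_def, ← Real.rpow_natCast, ← Real.rpow_mul hn0.le]; norm_num
  have ha3 : (n : ℝ) ^ ((3 : ℝ) / 4) = a ^ 3 := by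
    rw [ha_def, ← Real.rpow_natCast, ← Real.rpow_mul hn0.le]; norm_num
  have ha5 : (n : ℝ) ^ ((5 : ℝ) / 4) = a ^ 5 := by
    rw [ha_def, ← Real.rpow_natCast, ← Real.rpow_mul hn0.le]; norm_num
  have ha2 : √(n : ℝ) = a ^ 2 := by
    rw [ha4, show a ^ 4 = (a ^ 2) ^ 2 by ring, Real.sqrt_sq (by positivity)]
  have hq2 : (L : ℝ) = q ^ 2 := (Real.sq_sqrt hL0.le).symm
  have hq3 : ((L * L : ℕ) : ℝ) ^ ((3 : ℝ) / 4) = q ^ 3 := by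
    rw [Nat.cast_mul, hq2, show q ^ 2 * q ^ 2 = q ^ (4 : ℝ) by norm_cast; ring,
      ← Real.rpow_mul hq.le, ← Real.rpow_natCast]
    norm_num
  have hs2 : 1 - σ = s ^ 2 := (Real.sq_sqrt (by linarith)).symm
  have hsinv : (1 - σ) ^ (-(1 : ℝ) / 2) = s⁻¹ := by
    rw [hs_def, Real.sqrt_eq_rpow, ← Real.rpow_neg (by linarith)]; norm_num
  rw [hq3] at hh
  have hhpos : 0 < h := by rw [hh]; positivity
  obtain ⟨φ, hφ⟩ := exists_isRegLeader hKconv hKcomp hhpos hxin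
  -- The averaged dual variable; since `Ico 1 0 = Ico 1 1 = ∅`, `w 0 = w 1 = 0`, so that the
  -- reference point `φ (w (m - 1))` is `xin` in the first block.
  set w : ℕ → EuclideanSpace ℝ (Fin d) :=
    fun m => ∑ k ∈ Finset.Ico 1 m, (n : ℝ)⁻¹ • ∑ j, ghat j k with hw_def
  have hw1 : w 1 = 0 := by simp [hw_def]
  have hw0 : w 0 = 0 := by simp [hw_def]
  have hw : ∀ m, 1 ≤ m → w (m + 1) = w m + (n : ℝ)⁻¹ • ∑ j, ghat j m := fun m hm =>
    Finset.sum_Ico_succ_top hm _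
  have hcard : ∀ m ∈ Finset.Icc 1 L, (Finset.Icc ((m - 1) * L + 1) (m * L)).card = L := by
    intro m hm
    obtain ⟨k, rfl⟩ : ∃ k, m = k + 1 := ⟨m - 1, by simp at hm; omega⟩
    rw [Nat.card_Icc, Nat.add_sub_cancel, Nat.succ_mul]
    omega
  have hghat_le : ∀ (j : Fin n), ∀ m ∈ Finset.Icc 1 L, ‖ghat j m‖ ≤ L * G := by
    intro j m hm
    rw [hghat j m hm]
    refine (norm_sum_le_of_le _ fun t ht =>
      hgrad t (hsub m hm t ht) j _ (hxK j m hm)).trans_eq ?_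
    rw [Finset.sum_const, hcard m hm, nsmul_eq_mul]
  have hgbar : ∀ m ∈ Finset.Icc 1 L, ‖(n : ℝ)⁻¹ • ∑ j, ghat j m‖ ≤ L * G := by
    intro m hm
    rw [norm_smul, norm_inv, Real.norm_natCast, inv_mul_le_iff₀ hn0]
    refine (norm_sum_le_of_le _ fun j _ => hghat_le j m hm).trans_eq ?_
    simp
  have hcons := consensus_le hn P hrow hcol hσ hσlt (by positivity) ghat z w hghat_le hz1 hzrec
    hw1 hw
  set ρ : ℝ := 4 * R / q + √n * (L * G) / (1 - σ) / (2 * h) with hρ_def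
  have hdist : ∀ m ∈ Finset.Icc 1 L, ∀ j, ‖x j m - φ (w (m - 1))‖ ≤ ρ := by
    intro m hm j
    obtain ⟨k, rfl⟩ : ∃ k, m = k + 1 := ⟨m - 1, by simp at hm; omega⟩
    rw [Nat.add_sub_cancel]
    rcases Nat.eq_zero_or_pos k with rfl | hk
    · rw [hx1, hw0, hφ.zero hhpos hxin, sub_self, norm_zero]
      have : 0 < 1 - σ := by linarith
      positivity
    · have hkL : k + 1 ≤ L := (Finset.mem_Icc.1 hm).2
      obtain ⟨cs, vs, ss, -, hcL, hcs, hvs, -, hlin, hls, hstep⟩ :=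
        hCG j k (by simp; omega)
      have h1 := cg_dist hφ hhpos hballout L hK (F k j) (hF k j) cs vs ss hcs hvs hlin hls hstep
      rw [hcL] at h1
      have h2 : ‖x j (k + 1) - φ (z j k)‖ ≤ 4 * R / q := by
        refine (sq_le_sq₀ (norm_nonneg _) (by positivity)).1 (h1.trans ?_)
        rw [div_pow, ← hq2, show (4 * R) ^ 2 = 16 * R ^ 2 by ring]
        exact div_le_div_of_nonneg_left (by positivity) hL0 (by linarith)
      have h3 := hφ.lipschitz hhpos (z j k) (w k)
      have h4 := div_le_div_of_nonneg_right (hcons j k (by simp; omega))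
        (by positivity : 0 ≤ 2 * h)
      rw [show x j (k + 1) - φ (w k) = (x j (k + 1) - φ (z j k)) + (φ (z j k) - φ (w k)) by abel]
      exact (norm_add_le _ _).trans (add_le_add h2 (h3.trans h4))
  have hmove : ∀ m ∈ Finset.Icc 1 L,
      ‖φ (w (m - 1)) - φ (w (m + 1))‖ ≤ 2 * (L * G) / (2 * h) := by
    intro m hm
    refine (hφ.lipschitz hhpos _ _).trans (div_le_div_of_nonneg_right ?_ (by positivity))
    obtain ⟨k, rfl⟩ : ∃ k, m = k + 1 := ⟨m - 1, by simp at hm; omega⟩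
    have hkL : k + 1 ≤ L := (Finset.mem_Icc.1 hm).2
    rw [Nat.add_sub_cancel, norm_sub_rev, hw (k + 1) (by omega)]
    have h1 := hgbar (k + 1) hm
    rcases Nat.eq_zero_or_pos k with rfl | hk
    · rw [hw0, zero_add, hw1, zero_add, sub_zero]
      have : 0 ≤ (L : ℝ) * G := by positivity
      linarith
    · have h2 := hgbar k (by simp; omega)
      rw [hw k hk, add_assoc, add_sub_cancel_left]
      linarith [norm_add_le ((n : ℝ)⁻¹ • ∑ j, ghat j k) ((n : ℝ)⁻¹ • ∑ j, ghat j (k + 1))]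
  have hblock : ∀ m ∈ Finset.Icc 1 L,
      ∑ t ∈ Finset.Icc ((m - 1) * L + 1) (m * L), ∑ j, f t j (x i m) -
        ∑ t ∈ Finset.Icc ((m - 1) * L + 1) (m * L), ∑ j, f t j xstar ≤
      L * n * (3 * G * ρ + G * (2 * (L * G) / (2 * h))) +
        n * ⟪(n : ℝ)⁻¹ • ∑ j, ghat j m, φ (w (m + 1)) - xstar⟫ := by
    intro m hm
    have h1 := block_regret_le hG (Finset.Icc ((m - 1) * L + 1) (m * L)) f f' hdiff hconv
      (fun t ht => hlip t (hsub m hm t ht)) (fun t ht => hgrad t (hsub m hm t ht))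
      (fun j => x j m) (fun j => hxK j m hm) hxs (hdist m hm) (hmove m hm) i
    rw [hcard m hm, ← Finset.sum_congr rfl fun j _ => hghat j m hm] at h1
    rwa [real_inner_smul_left, mul_inv_cancel_left₀ hn0.ne']
  refine (Finset.sum_le_sum hblock).trans ?_
  rw [Finset.sum_add_distrib, Finset.sum_const, Nat.card_Icc, Nat.add_sub_cancel, nsmul_eq_mul,
    ← Finset.mul_sum]
  have hbtl : ∑ m ∈ Finset.Icc 1 L, ⟪(n : ℝ)⁻¹ • ∑ j, ghat j m, φ (w (m + 1)) - xstar⟫ ≤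
      h * (4 * R ^ 2) := by
    have h1 := hφ.btl hhpos.le (fun m => (n : ℝ)⁻¹ • ∑ j, ghat j m) w hw1 hw L xstar hxs
    have h2 : w (L + 1) = ∑ m ∈ Finset.Icc 1 L, (n : ℝ)⁻¹ • ∑ j, ghat j m := by
      rw [hw_def, ← Finset.Ico_add_one_right_eq_Icc]
    rw [h2, sum_inner] at h1
    simp only [inner_sub_right, Finset.sum_sub_distrib]
    have h3 : ‖xstar - xin‖ ≤ 2 * R := by
      linarith [norm_sub_le xstar xin, hnorm _ hxs, hnorm _ hxin]
    have h4 : ‖xstar - xin‖ ^ 2 ≤ 4 * R ^ 2 := by nlinarith [norm_nonneg (xstar - xin)]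
    have h5 := mul_le_mul_of_nonneg_left h4 hhpos.le
    linarith
  refine (add_le_add_right (mul_le_mul_of_nonneg_left hbtl hn0.le) _).trans ?_
  have hfin := tuned_bound ha hq hs hR hGpos
  rw [hρ_def, ha2, ha3, ha5, hq3, hsinv, hh, hs2, ha4, hq2]
  exact hfin
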